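/- In every MV-algebra A, define x→y := ¬x⊕y, p(x,y,z) := ((x→y)→z)∧((z→y)→x), t(x,y,z) := (y→(x∧z))∧(x∨z), and r(x,y,z) := p(x,y,z)∧t(x,y,z). Then for all x,y,z ∈ A: r(x,x,z)=z, r(x,y,y)=x, and r(x,y,x)=x; i.e. r is a Pixley term, so the variety of MV-algebras is arithmetical. -/

import Mathlib

namespace MVPaper

/-- An MV-algebra: a set with a binary `⊕`, a unary `¬`, and a constant `0`
satisfying the MV-algebra axioms. -/
class MV (α : Type*) where
  oplus : α → α → α
  neg : α → α
  zero : α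
  oplus_assoc : ∀ x y z : α, oplus x (oplus y z) = oplus (oplus x y) z
  oplus_comm : ∀ x y : α, oplus x y = oplus y x
  oplus_zero : ∀ x : α, oplus x zero = x
  neg_neg : ∀ x : α, neg (neg x) = x
  oplus_neg_zero : ∀ x : α, oplus x (neg zero) = neg zero
  lukasiewicz : ∀ x y : α,
    oplus (neg (oplus (neg x) y)) y = oplus (neg (oplus (neg y) x)) x

namespace MV

variable {α : Type*} [MV α]

/-- `1 := ¬0`. -/
def one : α := neg zero

/-- `x ⊙ y := ¬(¬x ⊕ ¬y)`. -/
def odot (x y : α) : α := neg (oplus (neg x) (neg y))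

/-- `x ⊖ y := ¬(¬x ⊕ y)`. -/
def ominus (x y : α) : α := neg (oplus (neg x) y)

/-- `d(x,y) := (x ⊖ y) ⊕ (y ⊖ x)`. -/
def dist (x y : α) : α := oplus (ominus x y) (ominus y x)

/-- The natural order: `x ≤ y` iff `¬x ⊕ y = 1`. -/
def le (x y : α) : Prop := oplus (neg x) y = one

/-- `x ∨ y := (x ⊖ y) ⊕ y`. -/
def sup (x y : α) : α := oplus (ominus x y) y

/-- `x ∧ y := x ⊙ (¬x ⊕ y)`. -/
def inf (x y : α) : α := odot x (oplus (neg x) y)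

/-- `n · a`, the `n`-fold sum `a ⊕ ⋯ ⊕ a`. -/
def nsmul : ℕ → α → α
  | 0, _ => zero
  | n + 1, a => oplus a (nsmul n a)

end MV

/-- Products of MV-algebras, with componentwise operations. -/
instance prodMV {α β : Type*} [MV α] [MV β] : MV (α × β) where
  oplus x y := (MV.oplus x.1 y.1, MV.oplus x.2 y.2)
  neg x := (MV.neg x.1, MV.neg x.2)
  zero := (MV.zero, MV.zero)
  oplus_assoc x y z :=
    congrArg₂ Prod.mk (MV.oplus_assoc _ _ _) (MV.oplus_assoc _ _ _)
  oplus_comm x y :=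
    congrArg₂ Prod.mk (MV.oplus_comm _ _) (MV.oplus_comm _ _)
  oplus_zero x := by
    obtain ⟨a, b⟩ := x
    exact congrArg₂ Prod.mk (MV.oplus_zero a) (MV.oplus_zero b)
  neg_neg x := by
    obtain ⟨a, b⟩ := x
    exact congrArg₂ Prod.mk (MV.neg_neg a) (MV.neg_neg b)
  oplus_neg_zero x :=
    congrArg₂ Prod.mk (MV.oplus_neg_zero _) (MV.oplus_neg_zero _)
  lukasiewicz x y :=
    congrArg₂ Prod.mk (MV.lukasiewicz _ _) (MV.lukasiewicz _ _)

/-- A homomorphism of MV-algebras: a map preserving `⊕`, `¬` and `0`. -/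
structure IsHom {α β : Type*} [MV α] [MV β] (f : α → β) : Prop where
  map_zero : f MV.zero = MV.zero
  map_oplus : ∀ x y : α, f (MV.oplus x y) = MV.oplus (f x) (f y)
  map_neg : ∀ x : α, f (MV.neg x) = MV.neg (f x)

/-- An ideal of an MV-algebra: contains `0`, closed under `⊕`, downward closed. -/
structure IsIdeal {α : Type*} [MV α] (I : Set α) : Prop where
  zero_mem : MV.zero ∈ I
  oplus_mem : ∀ ⦃x⦄, x ∈ I → ∀ ⦃y⦄, y ∈ I → MV.oplus x y ∈ I
  lower_mem : ∀ ⦃x⦄, x ∈ I → ∀ ⦃y⦄, MV.le y x → y ∈ I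

/-- The kernel of a homomorphism. -/
def ker {α β : Type*} [MV α] [MV β] (f : α → β) : Set α := {x | f x = MV.zero}

/-- The radical of an MV-algebra: `Rad(A) = {a | n·a ≤ ¬a for all n}`
(the intersection of all maximal proper ideals). -/
def Rad (α : Type*) [MV α] : Set α :=
  {a | ∀ n : ℕ, MV.le (MV.nsmul n a) (MV.neg a)}

/-- `P(A) := Rad(A) ∪ ¬Rad(A)`. -/
def PSet (α : Type*) [MV α] : Set α :=
  Rad α ∪ {x | MV.neg x ∈ Rad α}

/-- An MV-algebra is trivial if `0 = 1`. -/
def IsTrivial (α : Type*) [MV α] : Prop := (MV.zero : α) = MV.one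

/-- An MV-algebra is semisimple if its radical is trivial. -/
def Semisimple (α : Type*) [MV α] : Prop := Rad α = ({MV.zero} : Set α)

/-- An MV-algebra is perfect if `A = Rad(A) ∪ ¬Rad(A)`. -/
def Perfect (α : Type*) [MV α] : Prop := ∀ a : α, a ∈ PSet α

/-- `q : α → Q` realizes `Q` as the quotient of `α` by the ideal `I`,
i.e. by the congruence `x ∼ y ↔ d(x,y) ∈ I`. -/
structure IsQuotientBy {α Q : Type*} [MV α] [MV Q] (I : Set α) (q : α → Q) : Prop where
  hom : IsHom q
  surj : Function.Surjective q
  eq_iff : ∀ x y : α, q x = q y ↔ MV.dist x y ∈ I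

/-- `x → y := ¬x ⊕ y`. -/
def arr {α : Type*} [MV α] (x y : α) : α := MV.oplus (MV.neg x) y

/-- `p(x,y,z) := ((x→y)→z) ∧ ((z→y)→x)`. -/
def pterm {α : Type*} [MV α] (x y z : α) : α :=
  MV.inf (arr (arr x y) z) (arr (arr z y) x)

/-- `t(x,y,z) := (y→(x∧z)) ∧ (x∨z)`. -/
def tterm {α : Type*} [MV α] (x y z : α) : α :=
  MV.inf (arr y (MV.inf x z)) (MV.sup x z)

/-- `r(x,y,z) := p(x,y,z) ∧ t(x,y,z)`. -/
def rterm {α : Type*} [MV α] (x y z : α) : α :=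
  MV.inf (pterm x y z) (tterm x y z)

/-!
Every MV-algebra is a residuated lattice: `x ↦ a → x` is right adjoint to `x ↦ a ⊙ x`, while
`x ∨ y = (x → y) → y` and `x ∧ y = x ⊙ (x → y)`. Hence `p(x,x,z) = (1 → z) ∧ ((z → x) → x)
= z ∧ (z ∨ x) = z`, and `z ≤ t(x,x,z)` because `x ⊙ z ≤ x ∧ z`; so `r(x,x,z) = z`. As `r` is
symmetric in its outer variables, `r(x,y,y) = x` follows. Finally `t(x,y,x) = (y → x) ∧ x = x`,
which lies below `p(x,y,x) = (x → y) → x`.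
-/

namespace MV

variable {α : Type*} [MV α]

theorem zero_oplus (a : α) : oplus zero a = a := by
  rw [oplus_comm, oplus_zero]

theorem neg_one : neg (one : α) = zero := neg_neg zero

theorem oplus_one (a : α) : oplus a one = one := oplus_neg_zero a

theorem oplus_left_comm (a b c : α) : oplus a (oplus b c) = oplus b (oplus a c) := by
  rw [oplus_assoc, oplus_comm a b, ← oplus_assoc]

theorem odot_comm (a b : α) : odot a b = odot b a := by
  rw [odot, odot, oplus_comm]

theorem one_arr (a : α) : arr one a = a := by
  rw [arr, neg_one, zero_oplus]

theorem arr_one (a : α) : arr a one = one := oplus_one (neg a)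

protected theorem sup_comm (a b : α) : sup a b = sup b a := lukasiewicz a b

theorem sup_eq_arr_arr (a b : α) : sup a b = arr (arr a b) b := rfl

theorem arr_self (a : α) : arr a a = one := by
  calc arr a a = sup one a := by rw [sup_eq_arr_arr, one_arr]
    _ = sup a one := MV.sup_comm one a
    _ = one := arr_one (arr a one)

theorem inf_eq_neg_sup_neg (a b : α) : inf a b = neg (sup (neg b) (neg a)) := by
  rw [inf, odot, sup, ominus, neg_neg, oplus_comm b, oplus_comm (neg a) (neg _)]

protected theorem inf_comm (a b : α) : inf a b = inf b a := by
  rw [inf_eq_neg_sup_neg, MV.sup_comm, ← inf_eq_neg_sup_neg]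

protected theorem sup_eq_right {a b : α} (h : le a b) : sup a b = b := by
  rw [sup_eq_arr_arr, show arr a b = one from h, one_arr]

protected theorem inf_eq_left {a b : α} (h : le a b) : inf a b = a := by
  rw [inf, show oplus (neg a) b = one from h, odot, neg_one, oplus_zero, neg_neg]

theorem le_oplus_of_le_right {a b : α} (c : α) (h : le a b) : le a (oplus c b) := by
  rw [le, oplus_left_comm, show oplus (neg a) b = one from h, oplus_one]

protected theorem le_trans {a b c : α} (hab : le a b) (hbc : le b c) : le a c := by
  have hc : oplus (ominus c b) b = c := (MV.sup_comm c b).trans (MV.sup_eq_right hbc)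
  rw [← hc]
  exact le_oplus_of_le_right _ hab

protected theorem le_antisymm {a b : α} (hab : le a b) (hba : le b a) : a = b :=
  calc a = sup b a := (MV.sup_eq_right hba).symm
    _ = sup a b := MV.sup_comm b a
    _ = b := MV.sup_eq_right hab

/-- The natural order of an MV-algebra. It is only a local instance, since on products
it would compete with Mathlib's componentwise order. -/
abbrev partialOrder : PartialOrder α where
  le := le
  le_refl := arr_self
  le_trans _ _ _ := MV.le_trans
  le_antisymm _ _ := MV.le_antisymm

attribute [local instance] partialOrder

theorem le_iff_arr_eq_one {a b : α} : a ≤ b ↔ arr a b = one := Iff.rfl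

theorem arr_odot (a b c : α) : arr (odot a b) c = arr b (arr a c) := by
  rw [arr, odot, neg_neg, ← oplus_assoc, oplus_left_comm, arr, arr]

theorem gc_odot_arr (a : α) : GaloisConnection (odot a) (arr a) := fun b c => by
  rw [le_iff_arr_eq_one, le_iff_arr_eq_one, arr_odot]

theorem odot_le_left (a b : α) : odot a b ≤ a := by
  rw [gc_odot_arr a b a, arr_self]
  exact arr_one b

theorem odot_le_right (a b : α) : odot a b ≤ b := by
  rw [odot_comm]
  exact odot_le_left b a

theorem le_arr (a b : α) : b ≤ arr a b := (gc_odot_arr a).le_u (odot_le_right a b)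

theorem arr_le_arr_right {a b : α} (h : a ≤ b) (c : α) : arr b c ≤ arr a c := by
  refine (gc_odot_arr a).le_u ?_
  calc odot a (arr b c) = odot (arr b c) a := odot_comm _ _
    _ ≤ odot (arr b c) b := (gc_odot_arr _).monotone_l h
    _ = odot b (arr b c) := odot_comm _ _
    _ ≤ c := (gc_odot_arr b).l_u_le c

protected theorem le_inf {a b c : α} (hb : a ≤ b) (hc : a ≤ c) : a ≤ inf b c :=
  calc a = inf a b := (MV.inf_eq_left hb).symm
    _ = odot b (arr b a) := MV.inf_comm a b
    _ ≤ odot b (arr b c) := (gc_odot_arr b).monotone_l ((gc_odot_arr b).monotone_u hc)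

protected theorem sup_le {a b c : α} (ha : a ≤ c) (hb : b ≤ c) : sup a b ≤ c :=
  calc sup a b = arr (arr a b) b := sup_eq_arr_arr a b
    _ ≤ arr (arr c b) b := arr_le_arr_right (arr_le_arr_right ha b) b
    _ = sup b c := MV.sup_comm c b
    _ = c := MV.sup_eq_right hb

/-- The lattice structure of an MV-algebra, a local instance like `MV.partialOrder`. Its `⊔` and `⊓`
are by definition `MV.sup` and `MV.inf`, so that Mathlib's lattice lemmas apply to these. -/
abbrev lattice : Lattice α where
  __ := partialOrder
  sup := sup
  le_sup_left a b := (le_arr (arr b a) a).trans_eq (MV.sup_comm b a)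
  le_sup_right a b := le_arr (arr a b) b
  sup_le _ _ _ := MV.sup_le
  inf := inf
  inf_le_left a b := odot_le_left a (arr a b)
  inf_le_right a b := (gc_odot_arr a).l_u_le b
  le_inf _ _ _ := MV.le_inf

end MV

section Pixley

open MV

variable {α : Type*} [MV α]

attribute [local instance] MV.lattice

theorem pterm_comm (x y z : α) : pterm x y z = pterm z y x := MV.inf_comm _ _

theorem tterm_comm (x y z : α) : tterm x y z = tterm z y x := by
  rw [tterm, tterm, MV.inf_comm x z, MV.sup_comm x z]

theorem rterm_comm (x y z : α) : rterm x y z = rterm z y x := by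
  rw [rterm, rterm, pterm_comm, tterm_comm]

theorem pterm_self_left (x z : α) : pterm x x z = z :=
  calc pterm x x z = arr one z ⊓ arr (arr z x) x := by rw [pterm, arr_self]; rfl
    _ = z ⊓ (z ⊔ x) := by rw [one_arr]; rfl
    _ = z := inf_sup_self

theorem le_tterm_self_left (x z : α) : z ≤ tterm x x z := by
  have h : z ≤ arr x (x ⊓ z) :=
    (gc_odot_arr x).le_u (le_inf (odot_le_left x z) (odot_le_right x z))
  exact le_inf h le_sup_right

theorem rterm_self_left (x z : α) : rterm x x z = z := by
  rw [rterm, pterm_self_left]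
  exact inf_eq_left.2 (le_tterm_self_left x z)

theorem rterm_self_right (x y : α) : rterm x y y = x := by
  rw [rterm_comm, rterm_self_left]

theorem le_pterm_self_outer (x y : α) : x ≤ pterm x y x :=
  le_inf (le_arr _ x) (le_arr _ x)

theorem tterm_self_outer (x y : α) : tterm x y x = x :=
  calc tterm x y x = arr y (x ⊓ x) ⊓ (x ⊔ x) := rfl
    _ = arr y x ⊓ x := by rw [inf_idem, sup_idem]
    _ = x := inf_eq_right.2 (le_arr y x)

theorem rterm_self_outer (x y : α) : rterm x y x = x := by
  rw [rterm, tterm_self_outer]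
  exact inf_eq_right.2 (le_pterm_self_outer x y)

end Pixley

/-- `r` is a Pixley term for MV-algebras: `r(x,x,z)=z`, `r(x,y,y)=x`,
`r(x,y,x)=x`; hence the variety of MV-algebras is arithmetical. -/
theorem pixley_term {α : Type*} [MV α] (x y z : α) :
    rterm x x z = z ∧ rterm x y y = x ∧ rterm x y x = x :=
  ⟨rterm_self_left x z, rterm_self_right x y, rterm_self_outer x y⟩

end MVPaper
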